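/- Let g and k be integers with g >= 2 and 0 <= k <= g - 2. Then \sum_{i=0}^{k+1} \sum_{t=0}^{i} binom(2g - 3 - k - i, k + 1 - i) * (i + 1 - t) * binom(2g + 1, t) = binom(g, k+1) * 4^{k+1}. -/

import Mathlib

/-!
Put `n = k + 1` and `g = n + d + 1`. Since `C(2d + j, j)` is the coefficient of `X ^ j` in
`(1 - X)⁻¹ ^ (2d + 1)` and `j + 1` that of `(1 - X)⁻¹ ^ 2`, the double sum is a Cauchy product: the
coefficient of `X ^ n` in `(1 + X) ^ (2g + 1) * (1 - X)⁻¹ ^ (2d + 3)`.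

More generally, let `F n d` be the coefficient of `X ^ n` in
`(1 + X) ^ (2n + 2d + 1) * (1 - X)⁻¹ ^ (2d + 1)`. The identity `4 X = (1 + X) ^ 2 - (1 - X) ^ 2`
gives the Pascal-type recurrence `F (n + 1) (d + 1) = F (n + 1) d + 4 * F n (d + 1)`. With
`F 0 d = 1` and `F n 0 = ∑ t ≤ n, C(2n + 1, t) = 4 ^ n`, this forces `F n d = C(n + d, n) * 4 ^ n`
(`coeff_closed_form`); the double sum is `F n (d + 1)`.
-/

/-- The binomial coefficient `n choose r` for integers, with the convention
that it vanishes whenever `r < 0` or `r > n`. -/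
def ibinom (n r : ℤ) : ℤ :=
  if 0 ≤ r ∧ r ≤ n then (Nat.choose n.toNat r.toNat : ℤ) else 0

open PowerSeries in
/-- Here `PowerSeries.mk 1` is the geometric series `(1 - X)⁻¹`. -/
theorem coeff_closed_form (n d : ℕ) :
    coeff n ((1 + X) ^ (2 * n + 2 * d + 1) * (mk 1 : ℤ⟦X⟧) ^ (2 * d + 1)) =
      ((n + d).choose n : ℤ) * 4 ^ n := by
  induction n generalizing d with
  | zero =>
    rw [coeff_zero_eq_constantCoeff_apply, map_mul, map_pow, map_pow,
      ← coeff_zero_eq_constantCoeff_apply (mk 1), coeff_mk]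
    simp
  | succ n ihn =>
    induction d with
    | zero =>
      have h := Nat.sum_range_choose_halfway (n + 1)
      rw [show (1 + X : ℤ⟦X⟧) = ((1 + Polynomial.X : Polynomial ℤ) : ℤ⟦X⟧) by simp,
        ← Polynomial.coe_pow, coeff_mul,
        Finset.Nat.sum_antidiagonal_eq_sum_range_succ_mk]
      simp only [mul_zero, add_zero, zero_add, pow_one, Polynomial.coeff_coe,
        Polynomial.coeff_one_add_X_pow, coeff_mk, Pi.one_apply, mul_one, one_mul, Nat.choose_self,
        Nat.cast_one]
      exact_mod_cast h
    | succ d ihd =>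
      have hU : (mk 1 : ℤ⟦X⟧) * (1 - X) = 1 := mk_one_mul_one_sub_eq_one ℤ
      have key : (1 + X) ^ (2 * (n + 1) + 2 * (d + 1) + 1) * (mk 1 : ℤ⟦X⟧) ^ (2 * (d + 1) + 1) =
          (1 + X) ^ (2 * (n + 1) + 2 * d + 1) * (mk 1 : ℤ⟦X⟧) ^ (2 * d + 1) +
          C (4 : ℤ) * (X * ((1 + X) ^ (2 * n + 2 * (d + 1) + 1) *
            (mk 1 : ℤ⟦X⟧) ^ (2 * (d + 1) + 1))) := by
        have h4 : C (4 : ℤ) = (4 : ℤ⟦X⟧) := by simp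
        rw [h4]
        -- With `U = mk 1`, `(1 + X) ^ 2 - 4 X = (1 - X) ^ 2` reduces the claim to
        -- `(U * (1 - X)) ^ 2 - 1 = 0`.
        linear_combination ((1 + X) ^ (2 * n + 2 * d + 3) * (mk 1 : ℤ⟦X⟧) ^ (2 * d + 1) *
          ((mk 1 : ℤ⟦X⟧) * (1 - X) + 1)) * hU
      rw [key, map_add, ihd, coeff_C_mul, coeff_succ_X_mul, ihn,
        show n + 1 + (d + 1) = (n + (d + 1)) + 1 by ring, Nat.choose_succ_succ,
        show n + 1 + d = n + (d + 1) by ring]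
      push_cast
      ring

open PowerSeries in
theorem double_sum_nat (n d : ℕ) :
    ∑ i ∈ Finset.range (n + 1), ∑ t ∈ Finset.range (i + 1),
        ((2 * d + (n - i)).choose (n - i) : ℤ) * ((i : ℤ) + 1 - t) *
          ((2 * (n + d + 1) + 1).choose t : ℤ) =
      ((n + d + 1).choose n : ℤ) * 4 ^ n := by
  have h := coeff_closed_form n (d + 1)
  rw [← add_assoc] at h
  rw [← h, show (1 + X) ^ (2 * n + 2 * (d + 1) + 1) * (mk 1 : ℤ⟦X⟧) ^ (2 * (d + 1) + 1) =
      (((1 + Polynomial.X : Polynomial ℤ) ^ (2 * (n + d + 1) + 1) : Polynomial ℤ) : ℤ⟦X⟧) *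
        (mk 1 : ℤ⟦X⟧) ^ (1 + 1) * (mk 1 : ℤ⟦X⟧) ^ (2 * d + 1) by
      simp only [Polynomial.coe_pow, Polynomial.coe_add, Polynomial.coe_one, Polynomial.coe_X]
      ring,
    mk_one_pow_eq_mk_choose_add, mk_one_pow_eq_mk_choose_add, coeff_mul,
    Finset.Nat.sum_antidiagonal_eq_sum_range_succ_mk]
  refine Finset.sum_congr rfl fun i hi => ?_
  rw [coeff_mul, Finset.Nat.sum_antidiagonal_eq_sum_range_succ_mk, Finset.sum_mul]
  refine Finset.sum_congr rfl fun t ht => ?_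
  have ht' : t ≤ i := Nat.lt_succ_iff.mp (Finset.mem_range.mp ht)
  simp only [Polynomial.coeff_coe, Polynomial.coeff_one_add_X_pow, coeff_mk, Nat.choose_one_right]
  rw [Nat.choose_symm_add]
  push_cast [ht']
  ring

theorem ibinom_natCast (n r : ℕ) : ibinom n r = (n.choose r : ℤ) := by
  unfold ibinom
  split_ifs with h
  · simp
  · rw [Nat.choose_eq_zero_of_lt (by omega)]
    simp

theorem sum_Icc_int_eq_sum_range (n : ℕ) (f : ℤ → ℤ) :
    ∑ i ∈ Finset.Icc (0 : ℤ) n, f i = ∑ i ∈ Finset.range (n + 1), f i := by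
  symm
  refine Finset.sum_nbij (fun i : ℕ => (i : ℤ)) ?_ ?_ ?_ (fun _ _ => rfl)
  · intro i hi
    simp only [Finset.mem_range, Finset.mem_Icc] at *
    omega
  · intro a _ b _ h
    exact Int.ofNat_inj.mp h
  · intro z hz
    simp only [Finset.coe_Icc, Set.mem_Icc] at hz
    refine ⟨z.toNat, ?_, ?_⟩
    · simp only [Finset.coe_range, Set.mem_Iio]
      omega
    · simp [hz.1]

/-- Number of exceptional objects in the conjectural semiorthogonal decomposition
in the stacky case: for integers `g ≥ 2` and `0 ≤ k ≤ g - 2`,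
`∑_{i=0}^{k+1} ∑_{t=0}^{i} C(2g-3-k-i, k+1-i) * (i+1-t) * C(2g+1, t)
  = C(g, k+1) * 4^{k+1}`. -/
theorem number_of_exceptional_objects_stacky (g k : ℤ) (hg : 2 ≤ g) (hk0 : 0 ≤ k)
    (hk : k ≤ g - 2) :
    ∑ i ∈ Finset.Icc (0 : ℤ) (k + 1), ∑ t ∈ Finset.Icc (0 : ℤ) i,
        ibinom (2 * g - 3 - k - i) (k + 1 - i) * (i + 1 - t) * ibinom (2 * g + 1) t =
      ibinom g (k + 1) * 4 ^ (k + 1).toNat := by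
  obtain ⟨n, hn⟩ : ∃ n : ℕ, k + 1 = n := ⟨(k + 1).toNat, by omega⟩
  obtain ⟨d, hd⟩ : ∃ d : ℕ, g = ((n + d + 1 : ℕ) : ℤ) := ⟨(g - k - 2).toNat, by omega⟩
  rw [hn, sum_Icc_int_eq_sum_range, hd, ibinom_natCast, Int.toNat_natCast, ← double_sum_nat]
  refine Finset.sum_congr rfl fun i hi => ?_
  rw [sum_Icc_int_eq_sum_range]
  refine Finset.sum_congr rfl fun t _ => ?_
  have hi' : i ≤ n := Nat.lt_succ_iff.mp (Finset.mem_range.mp hi)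
  rw [show 2 * ((n + d + 1 : ℕ) : ℤ) - 3 - k - i = ((2 * d + (n - i) : ℕ) : ℤ) by omega,
    show (n : ℤ) - i = ((n - i : ℕ) : ℤ) by omega,
    show 2 * ((n + d + 1 : ℕ) : ℤ) + 1 = ((2 * (n + d + 1) + 1 : ℕ) : ℤ) by omega,
    ibinom_natCast, ibinom_natCast]
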